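/- Let (K, σ) be a difference field and β₁, β₂ ∈ K nonzero elements, and let f be the 3×3 matrix [[β₁, 0, 0], [1, β₂·β₁⁻¹, 0], [0, 1, β₂⁻¹]]. Then there is a unique upper unitriangular 3×3 matrix u over K such that σ(u)·f·u⁻¹ lies in A(K); and for this u one has σ(u)·f·u⁻¹ = [[θ₁, −θ₂, 1], [1, 0, 0], [0, 1, 0]], where θ₁ = β₁ + σ(β₂)·σ(β₁)⁻¹ + σ(σ(β₂))⁻¹ and θ₂ = β₂ + β₁·σ(β₂)⁻¹ + σ(β₁)⁻¹. (This is the q-difference Miura transformation formula θ₁(z) = β₁(z) + β₂(qz)/β₁(qz) + 1/β₂(q²z), θ₂(z) = β₂(z) + β₁(z)/β₂(qz) + 1/β₁(qz) for SL(3).) -/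

import Mathlib

/-- Steinberg's cross-section `A(K)` for `SL(n)` and the standard Coxeter element; for `n = 3`
these are the matrices `[[a₁, a₂, 1], [1, 0, 0], [0, 1, 0]]`. -/
def IsSteinbergA {n : ℕ} {R : Type*} [CommRing R] (m : Matrix (Fin n) (Fin n) R) : Prop :=
  (∀ i j : Fin n, (i : ℕ) = 0 → (j : ℕ) = n - 1 → m i j = (-1) ^ (n - 1)) ∧
  (∀ i j : Fin n, (i : ℕ) = (j : ℕ) + 1 → m i j = 1) ∧
  (∀ i j : Fin n, (i : ℕ) ≠ 0 → (i : ℕ) ≠ (j : ℕ) + 1 → m i j = 0)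

/-- Upper unitriangular matrices: the group `U(K)`. -/
def IsUniUpper {n : ℕ} {R : Type*} [CommRing R] (u : Matrix (Fin n) (Fin n) R) : Prop :=
  (∀ i : Fin n, u i i = 1) ∧ ∀ i j : Fin n, (j : ℕ) < (i : ℕ) → u i j = 0

/-!
Up to the entry in its top right corner, which the determinant controls, membership of a matrix in
`A(R)` says that each row after the first is the standard basis vector one place to the left. Thus
`σ(u)·f·u⁻¹ ∈ A(R)` becomes a recursion: each row of `u` is the image under `σ` of the next one,
multiplied by `f`. Since the last row of a unitriangular `u` is known, `u` is determined; conversely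
the recursion preserves unitriangularity as soon as `f` is unit Hessenberg. For `n = 3` running the
recursion gives `u`, and `σ(u)·f = m·u` then gives the first row of `m = σ(u)·f·u⁻¹`.
-/

/-- Unit upper Hessenberg matrices: entries `1` just below the diagonal and `0` further down. They
are the `f` for which the recursion defining `steinbergGauge` preserves unitriangularity. -/
def IsUnitHessenberg {n : ℕ} {R : Type*} [CommRing R] (f : Matrix (Fin n) (Fin n) R) : Prop :=
  (∀ i j : Fin n, (i : ℕ) = (j : ℕ) + 1 → f i j = 1) ∧
  ∀ i j : Fin n, (j : ℕ) + 1 < (i : ℕ) → f i j = 0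

/-- The unitriangular `u` with `σ(u)·f·u⁻¹` in `A(R)`, for `f` unit Hessenberg of determinant `1`,
built row by row from the bottom. -/
def steinbergGauge {n : ℕ} {R : Type*} [CommRing R] (σ : R →+* R)
    (f : Matrix (Fin (n + 1)) (Fin (n + 1)) R) : Matrix (Fin (n + 1)) (Fin (n + 1)) R :=
  Matrix.of (Fin.reverseInduction (Pi.single (Fin.last n) 1)
    fun _ nextRow => Matrix.vecMul (σ ∘ nextRow) f)

section

open Matrix

variable {n : ℕ} {R : Type*} [CommRing R]

theorem IsUniUpper.det_eq_one {u : Matrix (Fin n) (Fin n) R} (hu : IsUniUpper u) : u.det = 1 := by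
  rw [det_of_isUpperTriangular fun i j hij => hu.2 i j hij]
  exact Finset.prod_eq_one fun i _ => hu.1 i

theorem IsUniUpper.row_last {u : Matrix (Fin (n + 1)) (Fin (n + 1)) R} (hu : IsUniUpper u) :
    u (Fin.last n) = Pi.single (Fin.last n) 1 := by
  ext j
  obtain rfl | hj := eq_or_ne j (Fin.last n)
  · rw [hu.1, Pi.single_eq_same]
  · rw [hu.2 _ _ (Fin.lt_last_iff_ne_last.2 hj), Pi.single_eq_of_ne hj]

theorem IsUniUpper.mul_inv_eq_iff {u m g : Matrix (Fin n) (Fin n) R} (hu : IsUniUpper u) :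
    g * u⁻¹ = m ↔ g = m * u := by
  have hdet : IsUnit u.det := hu.det_eq_one ▸ isUnit_one
  constructor
  · rintro rfl
    rw [nonsing_inv_mul_cancel_right _ _ hdet]
  · rintro rfl
    rw [mul_nonsing_inv_cancel_right _ _ hdet]

theorem IsUniUpper.det_map_mul_mul_inv {u : Matrix (Fin n) (Fin n) R} (hu : IsUniUpper u)
    (σ : R →+* R) (f : Matrix (Fin n) (Fin n) R) : (u.map σ * f * u⁻¹).det = f.det := by
  have hσu : (u.map σ).det = 1 := by
    rw [← RingHom.mapMatrix_apply, ← RingHom.map_det, hu.det_eq_one, map_one]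
  rw [det_mul, det_mul, det_nonsing_inv, hσu, hu.det_eq_one, Ring.inverse_one, one_mul, mul_one]

theorem det_of_row_succ_eq_single {m : Matrix (Fin (n + 1)) (Fin (n + 1)) R}
    (hm : ∀ i : Fin n, m i.succ = Pi.single i.castSucc 1) :
    m.det = (-1) ^ n * m 0 (Fin.last n) := by
  have hminor : m.submatrix Fin.succ Fin.castSucc = 1 := by
    ext i j
    simp [hm, one_apply, Pi.single_apply, eq_comm]
  rw [det_succ_column m (Fin.last n), Fin.sum_univ_succ, Finset.sum_eq_zero]
  · simp [hminor, Fin.succAbove_zero, Fin.succAbove_last]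
  · intro i _
    simp [hm, (Fin.castSucc_lt_last i).ne']

theorem isSteinbergA_iff_row_succ {m : Matrix (Fin (n + 1)) (Fin (n + 1)) R} (hdet : m.det = 1) :
    IsSteinbergA m ↔ ∀ i : Fin n, m i.succ = Pi.single i.castSucc 1 := by
  constructor
  · rintro ⟨-, hone, hzero⟩ i
    ext j
    obtain rfl | hj := eq_or_ne j i.castSucc
    · rw [hone _ _ (by simp), Pi.single_eq_same]
    · rw [hzero _ _ (by simp) (by simpa [Fin.ext_iff, eq_comm] using hj), Pi.single_eq_of_ne hj]
  · intro hm
    refine ⟨fun i j hi hj => ?_, fun i j hij => ?_, fun i j hi hij => ?_⟩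
    · obtain rfl : i = 0 := Fin.ext hi
      obtain rfl : j = Fin.last n := Fin.ext hj
      have hcorner := det_of_row_succ_eq_single hm
      rw [hdet] at hcorner
      calc m 0 (Fin.last n) = (-1) ^ n * ((-1) ^ n * m 0 (Fin.last n)) := by
            rw [← mul_assoc, ← mul_pow, neg_one_mul, neg_neg, one_pow, one_mul]
        _ = (-1) ^ (n + 1 - 1) := by rw [← hcorner, mul_one, Nat.add_sub_cancel]
    · obtain ⟨k, rfl⟩ := Fin.exists_succ_eq.2 (show i ≠ 0 by rintro rfl; simp at hij)
      obtain rfl : j = k.castSucc := Fin.ext (by simpa [eq_comm] using hij)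
      rw [hm, Pi.single_eq_same]
    · obtain ⟨k, rfl⟩ := Fin.exists_succ_eq.2 (show i ≠ 0 by rintro rfl; simp at hi)
      rw [hm, Pi.single_eq_of_ne (by rintro rfl; simp at hij)]

variable (σ : R →+* R)

theorem steinbergGauge_last (f : Matrix (Fin (n + 1)) (Fin (n + 1)) R) :
    steinbergGauge σ f (Fin.last n) = Pi.single (Fin.last n) 1 :=
  Fin.reverseInduction_last ..

theorem steinbergGauge_castSucc (f : Matrix (Fin (n + 1)) (Fin (n + 1)) R) (i : Fin n) :
    steinbergGauge σ f i.castSucc = (σ ∘ steinbergGauge σ f i.succ) ᵥ* f :=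
  Fin.reverseInduction_castSucc ..

theorem IsUnitHessenberg.vecMul_apply_of_le {f : Matrix (Fin (n + 1)) (Fin (n + 1)) R}
    (hf : IsUnitHessenberg f) {i : Fin n} {v : Fin (n + 1) → R} (hone : v i.succ = 1)
    (hzero : ∀ k < i.succ, v k = 0) {j : Fin (n + 1)} (hj : j ≤ i.castSucc) :
    (v ᵥ* f) j = f i.succ j := by
  rw [vecMul, dotProduct, Finset.sum_eq_single i.succ]
  · rw [hone, one_mul]
  · intro k _ hk
    obtain hlt | hgt := lt_or_gt_of_ne hk
    · rw [hzero k hlt, zero_mul]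
    · rw [hf.2 k j (by simp [Fin.lt_def, Fin.le_def] at hgt hj; omega), mul_zero]
  · simp

theorem IsUnitHessenberg.isUniUpper_steinbergGauge
    {f : Matrix (Fin (n + 1)) (Fin (n + 1)) R} (hf : IsUnitHessenberg f) :
    IsUniUpper (steinbergGauge σ f) := by
  suffices h : ∀ i, steinbergGauge σ f i i = 1 ∧ ∀ j < i, steinbergGauge σ f i j = 0 from
    ⟨fun i => (h i).1, fun i => (h i).2⟩
  intro i
  induction i using Fin.reverseInduction with
  | last =>
    rw [steinbergGauge_last]
    exact ⟨Pi.single_eq_same _ _, fun j hj => Pi.single_eq_of_ne hj.ne _⟩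
  | cast i ih =>
    have hrow {j} (hj : j ≤ i.castSucc) : steinbergGauge σ f i.castSucc j = f i.succ j := by
      rw [steinbergGauge_castSucc]
      exact hf.vecMul_apply_of_le (by simp [ih.1]) (fun k hk => by simp [ih.2 k hk]) hj
    refine ⟨(hrow le_rfl).trans (hf.1 _ _ (by simp)), fun j hj => (hrow hj.le).trans ?_⟩
    exact hf.2 _ _ (by simpa [Fin.lt_def] using hj)

theorem IsUniUpper.eq_steinbergGauge_iff {u f : Matrix (Fin (n + 1)) (Fin (n + 1)) R}
    (hu : IsUniUpper u) :
    u = steinbergGauge σ f ↔ ∀ i : Fin n, u i.castSucc = (σ ∘ u i.succ) ᵥ* f := by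
  constructor
  · rintro rfl i
    exact steinbergGauge_castSucc σ f i
  · intro hrec
    funext i
    induction i using Fin.reverseInduction with
    | last => rw [hu.row_last, steinbergGauge_last]
    | cast i ih => rw [hrec, ih, steinbergGauge_castSucc]

theorem IsUniUpper.isSteinbergA_iff_eq_steinbergGauge
    {u f : Matrix (Fin (n + 1)) (Fin (n + 1)) R} (hu : IsUniUpper u) (hdet : f.det = 1) :
    IsSteinbergA (u.map σ * f * u⁻¹) ↔ u = steinbergGauge σ f := by
  set m := u.map σ * f * u⁻¹
  have hmu : u.map σ * f = m * u := hu.mul_inv_eq_iff.1 rfl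
  have hrow (i : Fin n) : (σ ∘ u i.succ) ᵥ* f = m i.succ ᵥ* u := congrFun hmu i.succ
  have hinj : Function.Injective fun v => v ᵥ* u :=
    vecMul_injective_of_isUnit ((isUnit_iff_isUnit_det u).2 (hu.det_eq_one ▸ isUnit_one))
  rw [isSteinbergA_iff_row_succ ((hu.det_map_mul_mul_inv σ f).trans hdet),
    hu.eq_steinbergGauge_iff]
  refine forall_congr' fun i => ?_
  rw [hrow, ← hinj.eq_iff, single_one_vecMul, eq_comm, row]

theorem IsUnitHessenberg.existsUnique_isSteinbergA
    {f : Matrix (Fin (n + 1)) (Fin (n + 1)) R} (hf : IsUnitHessenberg f) (hdet : f.det = 1) :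
    ∃! u, IsUniUpper u ∧ IsSteinbergA (u.map σ * f * u⁻¹) :=
  have hgauge := hf.isUniUpper_steinbergGauge σ
  ⟨steinbergGauge σ f, ⟨hgauge, (hgauge.isSteinbergA_iff_eq_steinbergGauge σ hdet).2 rfl⟩,
    fun _ ⟨hu, h⟩ => (hu.isSteinbergA_iff_eq_steinbergGauge σ hdet).1 h⟩

theorem isUnitHessenberg_lowerBidiagonal_three (a b c : R) :
    IsUnitHessenberg !![a, 0, 0; 1, b, 0; 0, 1, c] := by
  constructor <;> intro i j hij <;> fin_cases i <;> fin_cases j <;> simp at hij ⊢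

theorem steinbergGauge_lowerBidiagonal_three (a b c : R) :
    steinbergGauge σ !![a, 0, 0; 1, b, 0; 0, 1, c] =
      !![1, b + σ c, σ c * c; 0, 1, c; 0, 0, 1] := by
  set f := !![a, 0, 0; 1, b, 0; 0, 1, c] with hf
  have hrow₂ : steinbergGauge σ f 2 = ![0, 0, 1] := by
    rw [show (2 : Fin 3) = Fin.last 2 from rfl, steinbergGauge_last]
    ext j; fin_cases j <;> simp
  have hrow₁ : steinbergGauge σ f 1 = ![0, 1, c] := by
    refine (steinbergGauge_castSucc σ f 1).trans ?_
    rw [show Fin.succ (1 : Fin 2) = 2 from rfl, hrow₂]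
    ext j; fin_cases j <;> simp [hf, vecMul, dotProduct, Fin.sum_univ_three]
  have hrow₀ : steinbergGauge σ f 0 = ![1, b + σ c, σ c * c] := by
    refine (steinbergGauge_castSucc σ f 0).trans ?_
    rw [show Fin.succ (0 : Fin 2) = 1 from rfl, hrow₁]
    ext j; fin_cases j <;> simp [hf, vecMul, dotProduct, Fin.sum_univ_three]
  ext i j
  fin_cases i
  · exact congrFun hrow₀ j
  · exact congrFun hrow₁ j
  · exact congrFun hrow₂ j

theorem steinbergGauge_map_mul_lowerBidiagonal_three {a b c : R} (habc : a * b * c = 1) :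
    (steinbergGauge σ !![a, 0, 0; 1, b, 0; 0, 1, c]).map σ * !![a, 0, 0; 1, b, 0; 0, 1, c] =
      !![a + σ b + σ (σ c), -(a * b + a * σ c + σ b * σ c), 1; 1, 0, 0; 0, 1, 0] *
        steinbergGauge σ !![a, 0, 0; 1, b, 0; 0, 1, c] := by
  have hmap : (steinbergGauge σ !![a, 0, 0; 1, b, 0; 0, 1, c]).map σ =
      !![1, σ b + σ (σ c), σ (σ c) * σ c; 0, 1, σ c; 0, 0, 1] := by
    rw [steinbergGauge_lowerBidiagonal_three]
    ext i j; fin_cases i <;> fin_cases j <;> simp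
  rw [hmap, steinbergGauge_lowerBidiagonal_three, mul_fin_three, mul_fin_three]
  congrm !![?_, ?_, ?corner; ?_, ?_, ?_; ?_, ?_, ?_]
  case corner => linear_combination habc
  all_goals ring

/-- The coefficients are elementary symmetric functions of `a, b, c` twisted by powers of `σ`; the
Miura formula is the case `a = β₁`, `b = β₂ / β₁`, `c = 1 / β₂`. -/
theorem stmt_14_general {a b c : R} (habc : a * b * c = 1) :
    (∃! u : Matrix (Fin 3) (Fin 3) R,
      IsUniUpper u ∧ IsSteinbergA (u.map σ * !![a, 0, 0; 1, b, 0; 0, 1, c] * u⁻¹)) ∧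
    ∀ u : Matrix (Fin 3) (Fin 3) R,
      IsUniUpper u →
      IsSteinbergA (u.map σ * !![a, 0, 0; 1, b, 0; 0, 1, c] * u⁻¹) →
        u.map σ * !![a, 0, 0; 1, b, 0; 0, 1, c] * u⁻¹ =
          !![a + σ b + σ (σ c), -(a * b + a * σ c + σ b * σ c), 1; 1, 0, 0; 0, 1, 0] := by
  have hdet : (!![a, 0, 0; 1, b, 0; 0, 1, c] : Matrix _ _ R).det = 1 := by
    simpa [det_fin_three] using habc
  refine ⟨(isUnitHessenberg_lowerBidiagonal_three a b c).existsUnique_isSteinbergA σ hdet,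
    fun u hu h => hu.mul_inv_eq_iff.2 ?_⟩
  rw [(hu.isSteinbergA_iff_eq_steinbergGauge σ hdet).1 h]
  exact steinbergGauge_map_mul_lowerBidiagonal_three σ habc

end

/-- for a difference field `(K, σ)` and `β₁, β₂ ≠ 0`, with
`f = [[β₁, 0, 0], [1, β₂β₁⁻¹, 0], [0, 1, β₂⁻¹]]`, there is a unique upper unitriangular `u`
with `σ(u)·f·u⁻¹ ∈ A(K)`, and for it `σ(u)·f·u⁻¹ = [[θ₁, −θ₂, 1], [1, 0, 0], [0, 1, 0]]` with
`θ₁ = β₁ + σ(β₂)σ(β₁)⁻¹ + σ(σ(β₂))⁻¹` and `θ₂ = β₂ + β₁σ(β₂)⁻¹ + σ(β₁)⁻¹` (the q-difference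
Miura transformation for `SL(3)`). -/
theorem stmt_14 (K : Type*) [Field K] (σ : K ≃+* K) (β₁ β₂ : K) (hβ₁ : β₁ ≠ 0) (hβ₂ : β₂ ≠ 0) :
    (∃! u : Matrix (Fin 3) (Fin 3) K,
      IsUniUpper u ∧
        IsSteinbergA (u.map σ * !![β₁, 0, 0; 1, β₂ * β₁⁻¹, 0; 0, 1, β₂⁻¹] * u⁻¹)) ∧
    (∀ u : Matrix (Fin 3) (Fin 3) K,
      IsUniUpper u →
      IsSteinbergA (u.map σ * !![β₁, 0, 0; 1, β₂ * β₁⁻¹, 0; 0, 1, β₂⁻¹] * u⁻¹) →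
        u.map σ * !![β₁, 0, 0; 1, β₂ * β₁⁻¹, 0; 0, 1, β₂⁻¹] * u⁻¹ =
          !![β₁ + σ β₂ * (σ β₁)⁻¹ + (σ (σ β₂))⁻¹, -(β₂ + β₁ * (σ β₂)⁻¹ + (σ β₁)⁻¹), 1;
             1, 0, 0;
             0, 1, 0]) := by
  have hσβ₂ : σ β₂ ≠ 0 := by simpa using hβ₂
  have hab : β₁ * (β₂ * β₁⁻¹) = β₂ := by field_simp
  have hbc : σ β₂ * (σ β₁)⁻¹ * (σ β₂)⁻¹ = (σ β₁)⁻¹ := by field_simp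
  have habc : β₁ * (β₂ * β₁⁻¹) * β₂⁻¹ = 1 := by rw [hab, mul_inv_cancel₀ hβ₂]
  simpa only [RingHom.coe_coe, map_mul, map_inv₀, hab, hbc] using
    stmt_14_general (σ : K →+* K) habc
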